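/- Let Γ : ℝ² → ℝ be smooth and suppose smooth functions (m1, m2, n1, n2) satisfy the system: ∂ₜm1 + ∂ₓ(Γ m1) − n2 Γ = 0, ∂ₜm2 + ∂ₓ(Γ m2) + n1 Γ = 0, ∂ₜn1 + ∂ₓ(Γ n1) + m2 Γ = 0, ∂ₜn2 + ∂ₓ(Γ n2) − m1 Γ = 0. If moreover P = m1 n1 + m2 n2 > 0 everywhere on ℝ², then the local conservation law ∂ₜ(√P) + ∂ₓ(Γ √P) = 0 holds identically on ℝ². -/

import Mathlib

/-!
Along the transport operator `D = ∂ₜ + Γ ∂ₓ` the system reads `D m1 = -Γₓ m1 + Γ n2`,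
`D m2 = -Γₓ m2 - Γ n1`, `D n1 = -Γₓ n1 - Γ m2`, `D n2 = -Γₓ n2 + Γ m1`.
In `D P` for `P = m1 n1 + m2 n2` the terms carrying an undifferentiated `Γ` cancel, leaving
`D P = -2 Γₓ P`. As `P > 0`, the chain rule gives `D √P = D P / (2 √P) = -Γₓ √P`, which is the
conservation law.
-/

/-- Partial derivative with respect to the first (space) variable. -/
noncomputable def pX (f : ℝ × ℝ → ℝ) : ℝ × ℝ → ℝ :=
  fun p => deriv (fun x => f (x, p.2)) p.1

/-- Partial derivative with respect to the second (time) variable. -/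
noncomputable def pT (f : ℝ × ℝ → ℝ) : ℝ × ℝ → ℝ :=
  fun p => deriv (fun t => f (p.1, t)) p.2

/-- The derivative of `f` along the trajectories of the velocity field `u`, that is
`∂ₜ f + u ∂ₓ f` (see `materialDeriv_eq`). Encoding it as the Fréchet derivative in the direction
`(u p, 1)` gives it the Leibniz and chain rules of `fderiv`. -/
noncomputable def materialDeriv (u f : ℝ × ℝ → ℝ) (p : ℝ × ℝ) : ℝ :=
  fderiv ℝ f p (u p, 1)

section MaterialDeriv

variable {u f g : ℝ × ℝ → ℝ} {p : ℝ × ℝ}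

theorem pX_eq_fderiv (hf : DifferentiableAt ℝ f p) : pX f p = fderiv ℝ f p (1, 0) :=
  (hf.hasFDerivAt.comp_hasDerivAt p.1
    ((hasDerivAt_id p.1).prodMk (hasDerivAt_const p.1 p.2))).deriv

theorem pT_eq_fderiv (hf : DifferentiableAt ℝ f p) : pT f p = fderiv ℝ f p (0, 1) :=
  (hf.hasFDerivAt.comp_hasDerivAt p.2
    ((hasDerivAt_const p.2 p.1).prodMk (hasDerivAt_id p.2))).deriv

theorem materialDeriv_eq (hf : DifferentiableAt ℝ f p) :
    materialDeriv u f p = pT f p + u p * pX f p := by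
  have direction_eq : (u p, (1 : ℝ)) = (0, 1) + u p • (1, 0) := by simp
  rw [materialDeriv, direction_eq, map_add, map_smul, smul_eq_mul, pT_eq_fderiv hf,
    pX_eq_fderiv hf]

theorem materialDeriv_add (hf : DifferentiableAt ℝ f p) (hg : DifferentiableAt ℝ g p) :
    materialDeriv u (fun q => f q + g q) p = materialDeriv u f p + materialDeriv u g p := by
  simp only [materialDeriv, fderiv_fun_add hf hg, add_apply]

theorem materialDeriv_mul (hf : DifferentiableAt ℝ f p) (hg : DifferentiableAt ℝ g p) :
    materialDeriv u (fun q => f q * g q) p =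
      f p * materialDeriv u g p + g p * materialDeriv u f p := by
  simp only [materialDeriv, fderiv_fun_mul hf hg, add_apply, smul_apply, smul_eq_mul]

theorem materialDeriv_sqrt (hf : DifferentiableAt ℝ f p) (hf₀ : f p ≠ 0) :
    materialDeriv u (fun q => √(f q)) p = materialDeriv u f p / (2 * √(f p)) := by
  simp only [materialDeriv, fderiv_sqrt hf hf₀, smul_apply, smul_eq_mul]
  ring

theorem pX_mul (hf : DifferentiableAt ℝ f p) (hg : DifferentiableAt ℝ g p) :
    pX (fun q => f q * g q) p = f p * pX g p + g p * pX f p := by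
  rw [pX_eq_fderiv (hf.fun_mul hg), pX_eq_fderiv hf, pX_eq_fderiv hg]
  simp only [fderiv_fun_mul hf hg, add_apply, smul_apply, smul_eq_mul]

theorem pT_add_pX_mul_eq_materialDeriv
    (hu : DifferentiableAt ℝ u p) (hf : DifferentiableAt ℝ f p) :
    pT f p + pX (fun q => u q * f q) p = materialDeriv u f p + pX u p * f p := by
  rw [materialDeriv_eq hf, pX_mul hu hf]
  ring

theorem pT_sqrt_add_pX_mul_sqrt_eq_zero
    (hu : DifferentiableAt ℝ u p) (hf : DifferentiableAt ℝ f p) (hf₀ : 0 < f p)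
    (hD : materialDeriv u f p = -2 * pX u p * f p) :
    pT (fun q => √(f q)) p + pX (fun q => u q * √(f q)) p = 0 := by
  calc
    pT (fun q => √(f q)) p + pX (fun q => u q * √(f q)) p
        = materialDeriv u (fun q => √(f q)) p + pX u p * √(f p) :=
      pT_add_pX_mul_eq_materialDeriv hu (hf.sqrt hf₀.ne')
    _ = -2 * pX u p * √(f p) ^ 2 / (2 * √(f p)) + pX u p * √(f p) := by
      rw [materialDeriv_sqrt hf hf₀.ne', hD, Real.sq_sqrt hf₀.le]
    _ = 0 := by
      field_simp
      ring

end MaterialDeriv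

theorem materialDeriv_mul_add_mul_of_system {m1 m2 n1 n2 Γ : ℝ × ℝ → ℝ} {p : ℝ × ℝ}
    (hm1 : DifferentiableAt ℝ m1 p) (hm2 : DifferentiableAt ℝ m2 p)
    (hn1 : DifferentiableAt ℝ n1 p) (hn2 : DifferentiableAt ℝ n2 p)
    (hΓ : DifferentiableAt ℝ Γ p)
    (hsys : pT m1 p + pX (fun q => Γ q * m1 q) p - n2 p * Γ p = 0 ∧
      pT m2 p + pX (fun q => Γ q * m2 q) p + n1 p * Γ p = 0 ∧
      pT n1 p + pX (fun q => Γ q * n1 q) p + m2 p * Γ p = 0 ∧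
      pT n2 p + pX (fun q => Γ q * n2 q) p - m1 p * Γ p = 0) :
    materialDeriv Γ (fun q => m1 q * n1 q + m2 q * n2 q) p =
      -2 * pX Γ p * (m1 p * n1 p + m2 p * n2 p) := by
  rw [pT_add_pX_mul_eq_materialDeriv hΓ hm1, pT_add_pX_mul_eq_materialDeriv hΓ hm2,
    pT_add_pX_mul_eq_materialDeriv hΓ hn1, pT_add_pX_mul_eq_materialDeriv hΓ hn2] at hsys
  obtain ⟨hDm1, hDm2, hDn1, hDn2⟩ := hsys
  rw [materialDeriv_add (hm1.fun_mul hn1) (hm2.fun_mul hn2), materialDeriv_mul hm1 hn1,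
    materialDeriv_mul hm2 hn2]
  linear_combination n1 p * hDm1 + n2 p * hDm2 + m1 p * hDn1 + m2 p * hDn2

theorem stmt_5_general {m1 m2 n1 n2 Γ : ℝ × ℝ → ℝ} {p : ℝ × ℝ}
    (hm1 : DifferentiableAt ℝ m1 p) (hm2 : DifferentiableAt ℝ m2 p)
    (hn1 : DifferentiableAt ℝ n1 p) (hn2 : DifferentiableAt ℝ n2 p)
    (hΓ : DifferentiableAt ℝ Γ p)
    (hsys : pT m1 p + pX (fun q => Γ q * m1 q) p - n2 p * Γ p = 0 ∧
      pT m2 p + pX (fun q => Γ q * m2 q) p + n1 p * Γ p = 0 ∧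
      pT n1 p + pX (fun q => Γ q * n1 q) p + m2 p * Γ p = 0 ∧
      pT n2 p + pX (fun q => Γ q * n2 q) p - m1 p * Γ p = 0)
    (hpos : 0 < m1 p * n1 p + m2 p * n2 p) :
    pT (fun q => √(m1 q * n1 q + m2 q * n2 q)) p +
      pX (fun q => Γ q * √(m1 q * n1 q + m2 q * n2 q)) p = 0 :=
  pT_sqrt_add_pX_mul_sqrt_eq_zero hΓ ((hm1.fun_mul hn1).fun_add (hm2.fun_mul hn2)) hpos
    (materialDeriv_mul_add_mul_of_system hm1 hm2 hn1 hn2 hΓ hsys)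

theorem stmt_5
    (m1 m2 n1 n2 Γ : ℝ × ℝ → ℝ)
    (hm1 : ContDiff ℝ (⊤ : ℕ∞) m1) (hm2 : ContDiff ℝ (⊤ : ℕ∞) m2)
    (hn1 : ContDiff ℝ (⊤ : ℕ∞) n1) (hn2 : ContDiff ℝ (⊤ : ℕ∞) n2)
    (hΓ : ContDiff ℝ (⊤ : ℕ∞) Γ)
    (hsys : ∀ p : ℝ × ℝ,
        pT m1 p + pX (fun q => Γ q * m1 q) p - n2 p * Γ p = 0 ∧
        pT m2 p + pX (fun q => Γ q * m2 q) p + n1 p * Γ p = 0 ∧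
        pT n1 p + pX (fun q => Γ q * n1 q) p + m2 p * Γ p = 0 ∧
        pT n2 p + pX (fun q => Γ q * n2 q) p - m1 p * Γ p = 0)
    (P : ℝ × ℝ → ℝ)
    (hP : P = fun q => m1 q * n1 q + m2 q * n2 q)
    (hpos : ∀ p : ℝ × ℝ, 0 < P p) :
    ∀ p : ℝ × ℝ,
      pT (fun q => Real.sqrt (P q)) p + pX (fun q => Γ q * Real.sqrt (P q)) p = 0 := by
  subst hP
  have diff {f : ℝ × ℝ → ℝ} (hf : ContDiff ℝ (⊤ : ℕ∞) f) : Differentiable ℝ f :=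
    hf.differentiable (by simp)
  exact fun p => stmt_5_general (diff hm1 p) (diff hm2 p) (diff hn1 p) (diff hn2 p) (diff hΓ p)
    (hsys p) (hpos p)
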